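/- Suppose that the quadrature nodes and weights satisfy the vanishing-moment condition, that z_j ∉ {λ_1,…,λ_r} for every j = 1,…,N (so that each z_j B − A is nonsingular), and let V ∈ ℂ^{n×L}. Define Ŝ_k := Σ_{j=1}^N ω_j z_j^k (z_j B − A)^{-1} B V and let η := max{n_i : r+1 ≤ i ≤ d} (with η := 1 if r = d). Then for every integer k with 0 ≤ k ≤ N − η one has Ŝ_k = C^k Ŝ_0. -/

import Mathlib

noncomputable section
open Matrix

/-- The `n×n` Jordan block with eigenvalue `l`: diagonal entries `l`,
superdiagonal entries `1`, all other entries `0`. -/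
def jordanBlock (n : ℕ) (l : ℂ) : Matrix (Fin n) (Fin n) ℂ :=
  Matrix.of fun p q : Fin n =>
    if (q : ℕ) = (p : ℕ) then l else if (q : ℕ) = (p : ℕ) + 1 then 1 else 0

/-- `C := Q_{1:r} J_{1:r} Q̃_{1:r}ᴴ`, where `Q_{1:r}` consists of the columns of `Q`
belonging to the first `r` (Jordan) blocks, `Q̃_{1:r}ᴴ` of the corresponding rows of
`Q⁻¹`, and `J_{1:r} = J_{n_1}(λ_1) ⊕ ⋯ ⊕ J_{n_r}(λ_r)`. -/
def Cmat (d : ℕ) (ni : Fin d → ℕ) (r : ℕ) (lam : Fin d → ℂ)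
    (Q : Matrix ((i : Fin d) × Fin (ni i)) ((i : Fin d) × Fin (ni i)) ℂ) :
    Matrix ((i : Fin d) × Fin (ni i)) ((i : Fin d) × Fin (ni i)) ℂ :=
  Q.submatrix id (Subtype.val : {x : (i : Fin d) × Fin (ni i) // (x.1 : ℕ) < r} → _) *
    (Matrix.blockDiagonal' (fun i => jordanBlock (ni i) (lam i))).submatrix
      (Subtype.val : {x : (i : Fin d) × Fin (ni i) // (x.1 : ℕ) < r} → _) Subtype.val *
    (Q⁻¹).submatrix (Subtype.val : {x : (i : Fin d) × Fin (ni i) // (x.1 : ℕ) < r} → _) id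

/-- `Ŝ_k := ∑_j ω_j z_j^k (z_j B − A)⁻¹ B V`. -/
def Shat {n : Type*} [Fintype n] [DecidableEq n] {L N : ℕ}
    (z omega : Fin N → ℂ) (A B : Matrix n n ℂ) (V : Matrix n (Fin L) ℂ) (k : ℕ) :
    Matrix n (Fin L) ℂ :=
  ∑ j, (omega j * z j ^ k) • ((z j • B - A)⁻¹ * B * V)

/-!
If `(z_j B - A) X_j = B V` for all `j`, then a vanishing moment `∑ ω_j z_j^k = 0` makes the moments
`S_k = ∑ ω_j z_j^k X_j` satisfy `B S_{k+1} = A S_k`. On the finite blocks `B` is the identity, so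
there `S_{k+1} = J S_k`. On the infinite blocks `A` is the identity and `B` is nilpotent of index at
most `η`, so there `S_k = B^{η-1} S_{k+η-1}`, and this vanishes because
`B^{η-1} X_j = z_j B^η X_j - B^η V`.
-/

lemma mul_mul_inv_pow {n R : Type*} [Fintype n] [DecidableEq n] [CommRing R] {Q : Matrix n n R}
    (hQ : IsUnit Q) (D : Matrix n n R) (k : ℕ) : (Q * D * Q⁻¹) ^ k = Q * D ^ k * Q⁻¹ := by
  obtain ⟨Q, rfl⟩ := hQ
  rw [← coe_units_inv, Units.conj_pow]

lemma submatrix_mul_submatrix_of_injective {k l m n o p R : Type*} [Fintype n] [Fintype o]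
    [NonUnitalNonAssocSemiring R] {e : o → n} (he : Function.Injective e)
    (M : Matrix m n R) (N : Matrix n p R) (f : k → m) (g : l → p)
    (h : ∀ i, ∀ x ∉ Set.range e, ∀ j, M i x * N x j = 0) :
    M.submatrix f e * N.submatrix e g = (M * N).submatrix f g := by
  ext i j
  exact Fintype.sum_of_injective e he _ _ (fun x hx => h _ x hx _) fun _ => rfl

lemma blockDiagonal'_apply_eq_zero {o R : Type*} {m n : o → Type*} [DecidableEq o] [Zero R]
    {M : ∀ i, Matrix (m i) (n i) R} {x : (i : o) × m i} {y : (i : o) × n i}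
    (h : M x.1 = 0 ∨ M y.1 = 0) : blockDiagonal' M x y = 0 := by
  obtain ⟨i, a⟩ := x
  obtain ⟨j, b⟩ := y
  obtain rfl | hij := eq_or_ne i j
  · simp [or_self_iff.mp h]
  · exact blockDiagonal'_apply_ne M a b hij

lemma isUnit_blockDiagonal' {o R : Type*} {m : o → Type*} [Fintype o] [DecidableEq o]
    [∀ i, Fintype (m i)] [∀ i, DecidableEq (m i)] [Semiring R]
    {M : ∀ i, Matrix (m i) (m i) R} (hM : ∀ i, IsUnit (M i)) : IsUnit (blockDiagonal' M) :=
  (Pi.isUnit_iff.mpr hM).map (blockDiagonal'RingHom m R)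

section QuadratureMoment

variable {ι n m R : Type*} [Fintype ι] [CommRing R]

/-- The `k`-th moment `∑_j ω_j z_j^k X_j` of a matrix family sampled at the nodes `z` with weights
`ω`; `Ŝ_k` is the case `X_j = (z_j B − A)⁻¹ B V`. -/
def quadratureMoment (z ω : ι → R) (X : ι → Matrix n m R) (k : ℕ) : Matrix n m R :=
  ∑ j, (ω j * z j ^ k) • X j

variable [Fintype n] {z ω : ι → R} {X : ι → Matrix n m R} {A B E F : Matrix n n R}

lemma mul_quadratureMoment {l : Type*} (M : Matrix l n R) (k : ℕ) :
    M * quadratureMoment z ω X k = quadratureMoment z ω (fun j => M * X j) k := by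
  simp only [quadratureMoment, Matrix.mul_sum, Matrix.mul_smul]

lemma mul_quadratureMoment_succ {W : Matrix n m R} {k : ℕ}
    (hX : ∀ j, (z j • B - A) * X j = W) (hk : ∑ j, ω j * z j ^ k = 0) :
    B * quadratureMoment z ω X (k + 1) = A * quadratureMoment z ω X k := by
  rw [← sub_eq_zero]
  calc B * quadratureMoment z ω X (k + 1) - A * quadratureMoment z ω X k
      = ∑ j, (ω j * z j ^ k) • ((z j • B - A) * X j) := by
        rw [mul_quadratureMoment, mul_quadratureMoment, quadratureMoment, quadratureMoment,
          ← Finset.sum_sub_distrib]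
        simp only [Matrix.sub_mul, Matrix.smul_mul, smul_sub, smul_smul, pow_succ, mul_assoc]
    _ = 0 := by simp only [hX, ← Finset.sum_smul, hk, zero_smul]

variable [DecidableEq n]

lemma mul_quadratureMoment_eq_pow_mul {W : Matrix n m R} {N k : ℕ}
    (hω : ∀ i, i + 2 ≤ N → ∑ j, ω j * z j ^ i = 0) (hX : ∀ j, (z j • B - A) * X j = W)
    (hFBA : F * B * (F * A) = F * B) (p : ℕ) (hk : k + p + 1 ≤ N) :
    F * A * quadratureMoment z ω X k =
      (F * B) ^ p * (F * A) * quadratureMoment z ω X (k + p) := by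
  induction p with
  | zero => simp
  | succ p ih =>
    calc F * A * quadratureMoment z ω X k
        = (F * B) ^ p * F * (A * quadratureMoment z ω X (k + p)) := by
          rw [ih (by omega)]
          simp only [Matrix.mul_assoc]
      _ = (F * B) ^ p * (F * B) * quadratureMoment z ω X (k + p + 1) := by
          rw [← mul_quadratureMoment_succ hX (hω _ (by omega))]
          simp only [Matrix.mul_assoc]
      _ = (F * B) ^ (p + 1) * (F * A) * quadratureMoment z ω X (k + (p + 1)) := by
          rw [pow_succ, Matrix.mul_assoc _ (F * B) (F * A), hFBA, add_assoc]

lemma pow_mul_mul_eq_zero_of_pow_succ_eq_zero {ζ : R} {Y V : Matrix n m R} {p : ℕ}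
    (hY : (ζ • B - A) * Y = B * V) (hnil : (F * B) ^ (p + 1) = 0) :
    (F * B) ^ p * (F * A) * Y = 0 := by
  have hAY : A * Y = ζ • (B * Y) - B * V := by
    rw [← hY, Matrix.sub_mul, Matrix.smul_mul, sub_sub_cancel]
  calc (F * B) ^ p * (F * A) * Y = (F * B) ^ p * F * (A * Y) := by simp only [Matrix.mul_assoc]
    _ = ζ • ((F * B) ^ (p + 1) * Y) - (F * B) ^ (p + 1) * V := by
      simp only [hAY, Matrix.mul_sub, Matrix.mul_smul, pow_succ, Matrix.mul_assoc]
    _ = 0 := by simp only [hnil, Matrix.zero_mul, smul_zero, sub_zero]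

lemma mul_quadratureMoment_eq_zero {V : Matrix n m R} {N k η : ℕ}
    (hω : ∀ i, i + 2 ≤ N → ∑ j, ω j * z j ^ i = 0) (hX : ∀ j, (z j • B - A) * X j = B * V)
    (hFBA : F * B * (F * A) = F * B) (hη : 1 ≤ η) (hnil : (F * B) ^ η = 0) (hk : k + η ≤ N) :
    F * A * quadratureMoment z ω X k = 0 := by
  obtain ⟨p, rfl⟩ := Nat.exists_eq_add_of_le' hη
  rw [mul_quadratureMoment_eq_pow_mul hω hX hFBA p hk, mul_quadratureMoment]
  simp only [pow_mul_mul_eq_zero_of_pow_succ_eq_zero (hX _) hnil, quadratureMoment, smul_zero,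
    Finset.sum_const_zero]

/-- `E` and `F` stand for the projections onto the finite and the infinite blocks of a pencil in
canonical form, so that `E * A` is the finite part of `A` and `F * B` the nilpotent part of `B`. -/
theorem quadratureMoment_eq_pow_mul {V : Matrix n m R} {N k η : ℕ}
    (hω : ∀ i, i + 2 ≤ N → ∑ j, ω j * z j ^ i = 0) (hX : ∀ j, (z j • B - A) * X j = B * V)
    (hEF : E * B + F * A = 1) (hFBA : F * B * (F * A) = F * B) (hη : 1 ≤ η)
    (hnil : (F * B) ^ η = 0) (hk : k + η ≤ N) :
    quadratureMoment z ω X k = (E * A) ^ k * quadratureMoment z ω X 0 := by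
  induction k with
  | zero => simp
  | succ k ih =>
    calc quadratureMoment z ω X (k + 1)
        = (E * B + F * A) * quadratureMoment z ω X (k + 1) := by rw [hEF, Matrix.one_mul]
      _ = E * (B * quadratureMoment z ω X (k + 1)) := by
        rw [Matrix.add_mul, mul_quadratureMoment_eq_zero hω hX hFBA hη hnil hk, add_zero,
          Matrix.mul_assoc]
      _ = E * A * quadratureMoment z ω X k := by
        rw [mul_quadratureMoment_succ hX (hω k (by omega)), Matrix.mul_assoc]
      _ = (E * A) ^ (k + 1) * quadratureMoment z ω X 0 := by
        rw [ih (by omega), pow_succ', Matrix.mul_assoc (E * A)]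

end QuadratureMoment

section BlockPencil

variable {o R : Type*} {m : o → Type*} [Fintype o] [DecidableEq o] [∀ i, Fintype (m i)]
  [∀ i, DecidableEq (m i)] [CommRing R] {p : o → Prop} [DecidablePred p]
  {J K : ∀ i, Matrix (m i) (m i) R}

lemma isUnit_smul_blockDiagonal'_sub_blockDiagonal' {ζ : R}
    (hJ : ∀ i, p i → IsUnit (ζ • 1 - J i)) (hK : ∀ i, ¬ p i → IsNilpotent (K i)) :
    IsUnit (ζ • blockDiagonal' (fun i => if p i then 1 else K i) -
      blockDiagonal' (fun i => if p i then J i else 1)) := by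
  rw [← blockDiagonal'_smul, ← blockDiagonal'_sub]
  refine isUnit_blockDiagonal' fun i => ?_
  by_cases hi : p i
  · simpa [hi] using hJ i hi
  · simpa [hi] using ((hK i hi).smul ζ).isUnit_sub_one

theorem quadratureMoment_blockDiagonal'_eq_pow_mul {ι l : Type*} [Fintype ι] {z ω : ι → R}
    {X : ι → Matrix ((i : o) × m i) l R} {V : Matrix ((i : o) × m i) l R} {N k η : ℕ}
    (hω : ∀ i, i + 2 ≤ N → ∑ j, ω j * z j ^ i = 0)
    (hX : ∀ j, (z j • blockDiagonal' (fun i => if p i then 1 else K i) -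
      blockDiagonal' (fun i => if p i then J i else 1)) * X j =
        blockDiagonal' (fun i => if p i then 1 else K i) * V)
    (hη : 1 ≤ η) (hK : ∀ i, ¬ p i → K i ^ η = 0) (hk : k + η ≤ N) :
    quadratureMoment z ω X k =
      blockDiagonal' (fun i => if p i then J i else 0) ^ k * quadratureMoment z ω X 0 := by
  have hEA : blockDiagonal' (fun i => if p i then (1 : Matrix (m i) (m i) R) else 0) *
      blockDiagonal' (fun i => if p i then J i else 1) =
        blockDiagonal' (fun i => if p i then J i else 0) := by
    simp only [← blockDiagonal'_mul, ite_mul_ite, one_mul, mul_one]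
  have hFB : blockDiagonal' (fun i => if p i then (0 : Matrix (m i) (m i) R) else 1) *
      blockDiagonal' (fun i => if p i then 1 else K i) =
        blockDiagonal' (fun i => if p i then 0 else K i) := by
    simp only [← blockDiagonal'_mul, ite_mul_ite, one_mul, mul_one]
  rw [← hEA]
  refine quadratureMoment_eq_pow_mul (F := blockDiagonal' fun i => if p i then 0 else 1) hω hX
    ?_ ?_ hη ?_ hk
  · simp only [← blockDiagonal'_mul, ← blockDiagonal'_add, ← blockDiagonal'_one, ite_mul_ite]
    congr 1
    ext1 i
    by_cases hi : p i <;> simp [hi]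
  · simp only [hFB, ← blockDiagonal'_mul, ite_mul_ite, mul_zero, zero_mul, mul_one]
  · rw [hFB, ← blockDiagonal'_pow, ← blockDiagonal'_zero]
    congr 1
    ext1 i
    by_cases hi : p i <;> simp [hi, hK, Nat.ne_zero_of_lt hη]

end BlockPencil

section JordanBlock

variable (n : ℕ) (l : ℂ)

lemma jordanBlock_isUpperTriangular : (jordanBlock n l).IsUpperTriangular := by
  intro p q (hqp : q < p)
  rw [jordanBlock, of_apply, if_neg (by omega), if_neg (by omega)]

lemma charpoly_jordanBlock :
    (jordanBlock n l).charpoly = (Polynomial.X - Polynomial.C l) ^ n := by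
  rw [charpoly_of_isUpperTriangular _ (jordanBlock_isUpperTriangular n l)]
  simp [jordanBlock]

lemma jordanBlock_zero_pow : jordanBlock n 0 ^ n = 0 := by
  simpa [charpoly_jordanBlock] using aeval_self_charpoly (jordanBlock n 0)

variable {n l}

lemma isUnit_smul_one_sub_jordanBlock {w : ℂ} (hw : w ≠ l) :
    IsUnit (w • 1 - jordanBlock n l) := by
  rw [isUnit_iff_isUnit_det, smul_one_eq_diagonal, ← scalar_apply, ← eval_charpoly,
    charpoly_jordanBlock]
  simp [sub_eq_zero, hw]

end JordanBlock

lemma Cmat_eq_mul_blockDiagonal'_mul_inv (d : ℕ) (ni : Fin d → ℕ) (r : ℕ) (lam : Fin d → ℂ)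
    (Q : Matrix ((i : Fin d) × Fin (ni i)) ((i : Fin d) × Fin (ni i)) ℂ) :
    Cmat d ni r lam Q = Q * blockDiagonal'
      (fun i : Fin d => if (i : ℕ) < r then jordanBlock (ni i) (lam i) else 0) * Q⁻¹ := by
  let e : {x : (i : Fin d) × Fin (ni i) // (x.1 : ℕ) < r} → (i : Fin d) × Fin (ni i) :=
    Subtype.val
  let J : Matrix ((i : Fin d) × Fin (ni i)) ((i : Fin d) × Fin (ni i)) ℂ :=
    blockDiagonal' fun i => if (i : ℕ) < r then jordanBlock (ni i) (lam i) else 0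
  have hJ : (blockDiagonal' fun i => jordanBlock (ni i) (lam i)).submatrix e e =
      J.submatrix e e := by
    ext x y
    simp [J, e, blockDiagonal'_apply, x.2]
  have hrow (x) (hx : x ∉ Set.range e) (y) : J x y = 0 :=
    blockDiagonal'_apply_eq_zero (Or.inl (if_neg (by simpa [e] using hx)))
  have hcol (x y) (hy : y ∉ Set.range e) : J x y = 0 :=
    blockDiagonal'_apply_eq_zero (Or.inr (if_neg (by simpa [e] using hy)))
  calc Cmat d ni r lam Q = Q.submatrix id e * J.submatrix e e * Q⁻¹.submatrix e id := by
        rw [← hJ]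
        rfl
    _ = (Q * J).submatrix id e * Q⁻¹.submatrix e id := by
        rw [submatrix_mul_submatrix_of_injective Subtype.val_injective Q J]
        exact fun a x hx b => by rw [hrow x hx, mul_zero]
    _ = Q * J * Q⁻¹ := by
        rw [submatrix_mul_submatrix_of_injective Subtype.val_injective (Q * J), submatrix_id_id]
        intro a x hx b
        simp [Matrix.mul_apply, hcol _ x hx]

lemma Shat_mul_mul {n : Type*} [Fintype n] [DecidableEq n] {L N : ℕ} (z ω : Fin N → ℂ)
    {A B P Q : Matrix n n ℂ} (hP : IsUnit P) (V : Matrix n (Fin L) ℂ) (k : ℕ) :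
    Shat z ω (P * A * Q) (P * B * Q) V k = Q⁻¹ * Shat z ω A B (Q * V) k := by
  have hinv (ζ : ℂ) : (ζ • (P * B * Q) - P * A * Q)⁻¹ = Q⁻¹ * (ζ • B - A)⁻¹ * P⁻¹ := by
    rw [← Matrix.smul_mul, ← Matrix.mul_smul, ← Matrix.sub_mul, ← Matrix.mul_sub,
      Matrix.mul_inv_rev, Matrix.mul_inv_rev, Matrix.mul_assoc]
  have hsolve (ζ : ℂ) : (ζ • (P * B * Q) - P * A * Q)⁻¹ * (P * B * Q) * V =
      Q⁻¹ * ((ζ • B - A)⁻¹ * B * (Q * V)) := by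
    rw [hinv]
    simp only [Matrix.mul_assoc,
      nonsing_inv_mul_cancel_left P _ ((isUnit_iff_isUnit_det P).mp hP)]
  simp only [Shat, hsolve, Matrix.mul_sum, Matrix.mul_smul]

theorem Shat_weierstrass_eq_pow_mul {N L d r k : ℕ} {z ω : Fin N → ℂ}
    (hω : ∀ k, k + 2 ≤ N → ∑ j, ω j * z j ^ k = 0) {ni : Fin d → ℕ} {lam : Fin d → ℂ}
    (hz : ∀ j (i : Fin d), (i : ℕ) < r → z j ≠ lam i)
    (V : Matrix ((i : Fin d) × Fin (ni i)) (Fin L) ℂ)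
    (hk : k + ((Finset.univ.filter (fun i : Fin d => r ≤ (i : ℕ))).sup ni ⊔ 1) ≤ N) :
    let D := blockDiagonal' fun i : Fin d => if (i : ℕ) < r then jordanBlock (ni i) (lam i) else 1
    let E := blockDiagonal' fun i : Fin d => if (i : ℕ) < r then 1 else jordanBlock (ni i) 0
    Shat z ω D E V k = (blockDiagonal' fun i : Fin d =>
      if (i : ℕ) < r then jordanBlock (ni i) (lam i) else 0) ^ k * Shat z ω D E V 0 := by
  intro D E
  have hX (j : Fin N) : (z j • E - D) * ((z j • E - D)⁻¹ * E * V) = E * V := by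
    rw [Matrix.mul_assoc]
    refine mul_nonsing_inv_cancel_left _ _ ((isUnit_iff_isUnit_det _).mp ?_)
    exact isUnit_smul_blockDiagonal'_sub_blockDiagonal'
      (fun i hi => isUnit_smul_one_sub_jordanBlock (hz j i hi))
      (fun i _ => ⟨ni i, jordanBlock_zero_pow (ni i)⟩)
  refine quadratureMoment_blockDiagonal'_eq_pow_mul hω hX le_sup_right (fun i hi => ?_) hk
  refine pow_eq_zero_of_le (le_sup_of_le_left ?_) (jordanBlock_zero_pow (ni i))
  exact Finset.le_sup (f := ni) (by simpa using hi)

/-- Theorem 8 of the paper: under the Weierstrass canonical form of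
the regular pencil `zB − A` and the vanishing-moment condition, with each `z_j`
different from all finite eigenvalues `λ_1, …, λ_r`, for every
`0 ≤ k ≤ N − η` (where `η = max{n_i : r+1 ≤ i ≤ d}`, `η = 1` if `r = d`) one has
`Ŝ_k = C^k Ŝ_0`. -/
theorem stmt_0 (N : ℕ) (z omega : Fin N → ℂ)
    (hvm : ∀ k : ℕ, k + 2 ≤ N → ∑ j, omega j * z j ^ k = 0)
    (d : ℕ) (ni : Fin d → ℕ) (hni : ∀ i, 1 ≤ ni i) (r : ℕ) (hr : r ≤ d)
    (lam : Fin d → ℂ)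
    (A B Pt Q : Matrix ((i : Fin d) × Fin (ni i)) ((i : Fin d) × Fin (ni i)) ℂ)
    (hPt : IsUnit Pt) (hQ : IsUnit Q)
    (hA : Ptᴴ * A * Q = Matrix.blockDiagonal'
      (fun i : Fin d => if (i : ℕ) < r then jordanBlock (ni i) (lam i) else 1))
    (hB : Ptᴴ * B * Q = Matrix.blockDiagonal'
      (fun i : Fin d => if (i : ℕ) < r then 1 else jordanBlock (ni i) 0))
    (hzlam : ∀ (j : Fin N) (i : Fin d), (i : ℕ) < r → z j ≠ lam i)
    (L : ℕ) (V : Matrix ((i : Fin d) × Fin (ni i)) (Fin L) ℂ)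
    (k : ℕ)
    (hk : k + ((Finset.univ.filter (fun i : Fin d => r ≤ (i : ℕ))).sup ni ⊔ 1) ≤ N) :
    Shat z omega A B V k = Cmat d ni r lam Q ^ k * Shat z omega A B V 0 := by
  have hQdet : IsUnit Q.det := (isUnit_iff_isUnit_det Q).mp hQ
  have hShat (k : ℕ) : Shat z omega A B V k =
      Q * Shat z omega (Ptᴴ * A * Q) (Ptᴴ * B * Q) (Q⁻¹ * V) k := by
    rw [Shat_mul_mul z omega (show IsUnit Ptᴴ from hPt.star),
      mul_nonsing_inv_cancel_left Q _ hQdet, mul_nonsing_inv_cancel_left Q _ hQdet]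
  rw [hShat k, hShat 0, hA, hB, Shat_weierstrass_eq_pow_mul hvm hzlam _ hk,
    Cmat_eq_mul_blockDiagonal'_mul_inv, mul_mul_inv_pow hQ, Matrix.mul_assoc (Q * _),
    nonsing_inv_mul_cancel_left Q _ hQdet, Matrix.mul_assoc]
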